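/- arXiv:1807.00379 — 2 statements merged into one kernel-verified Lean document; each statement's English description precedes it below -/
import Mathlib

section
/- The dual cone of SDD^n_+ := SDD^n ∩ N^n satisfies (SDD^n_+)* = (SDD^n)* + N^n, i.e., it equals the Minkowski sum of the dual cone of SDD^n and the cone of symmetric entrywise nonnegative matrices. -/
open Matrix Set

noncomputable section

/-- The embedding `ι_{ij} : S² → Sⁿ` placing a 2×2 symmetric matrix into
rows/columns `i, j` with zeros elsewhere. -/
def iota {n : ℕ} (i j : Fin n) (S : Matrix (Fin 2) (Fin 2) ℝ) :
    Matrix (Fin n) (Fin n) ℝ :=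
  Matrix.of fun r s =>
    (if r = i ∧ s = i then S 0 0 else 0) +
    (if r = i ∧ s = j then S 0 1 else 0) +
    (if r = j ∧ s = i then S 1 0 else 0) +
    (if r = j ∧ s = j then S 1 1 else 0)

/-- The cone `SDDⁿ = Σ_{i<j} ι_{ij}(S²₊)` of scaled diagonally dominant matrices. -/
def SDD (n : ℕ) : Set (Matrix (Fin n) (Fin n) ℝ) :=
  {X | ∃ S : Fin n → Fin n → Matrix (Fin 2) (Fin 2) ℝ,
    (∀ i j : Fin n, (S i j).PosSemidef) ∧
    X = ∑ i : Fin n, ∑ j : Fin n, if i < j then iota i j (S i j) else 0}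

/-- `Nⁿ`: symmetric entrywise nonnegative matrices. -/
def NonnegMat (n : ℕ) : Set (Matrix (Fin n) (Fin n) ℝ) :=
  {X | X.IsSymm ∧ ∀ i j, 0 ≤ X i j}

/-- Dual cone within the space of symmetric matrices, w.r.t. the trace inner product. -/
def dualCone {n : ℕ} (C : Set (Matrix (Fin n) (Fin n) ℝ)) :
    Set (Matrix (Fin n) (Fin n) ℝ) :=
  {Y | Y.IsSymm ∧ ∀ X ∈ C, 0 ≤ (X * Y).trace}

open scoped Pointwise

/-!
Pairing with `ι_{ij}(S)` only sees the `{i, j}` principal block, so `(SDDⁿ)*` consists of the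
symmetric matrices all of whose 2×2 principal blocks are positive semidefinite, while testing a
member `Y` of `(SDDⁿ₊)*` against `ι_{ij}(vvᵀ)` with `v ≥ 0` shows that its 2×2 principal blocks are
copositive. A 2×2 copositive matrix becomes positive semidefinite when its off-diagonal entry is
capped at the geometric mean of the diagonal entries. Since capping fixes the diagonal, all blocks
of `Y` can be capped at once, and what is cut off is entrywise nonnegative.
-/

section Copositive

variable {m k : Type*}

/-- Copositive matrices: the symmetric real matrices whose quadratic form is nonnegative on the
nonnegative orthant. This is what testing a matrix against `vvᵀ` with `v ≥ 0` detects; symmetry is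
part of the definition. -/
structure Copositive [Fintype m] (M : Matrix m m ℝ) : Prop where
  isSymm : M.IsSymm
  dotProduct_mulVec_nonneg : ∀ v : m → ℝ, 0 ≤ v → 0 ≤ v ⬝ᵥ M *ᵥ v

lemma neg_sqrt_mul_le_of_binaryForm_nonneg {p q r : ℝ}
    (h : ∀ a b : ℝ, 0 ≤ a → 0 ≤ b → 0 ≤ p * a ^ 2 + 2 * q * (a * b) + r * b ^ 2) :
    -√(p * r) ≤ q := by
  have hp : 0 ≤ p := by simpa using h 1 0 zero_le_one le_rfl
  have hr : 0 ≤ r := by simpa using h 0 1 le_rfl zero_le_one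
  by_contra! hlt
  have hq : q < 0 := hlt.trans_le (neg_nonpos.2 (Real.sqrt_nonneg _))
  have hdet : p * r < q ^ 2 := by
    rw [← neg_sq, ← Real.sqrt_lt' (neg_pos.2 hq)]
    exact lt_neg_of_lt_neg hlt
  -- At `(-q, p)` and `(r, -q)` the form equals `p * (p * r - q ^ 2)` and `r * (p * r - q ^ 2)`.
  have hp0 : p = 0 := by nlinarith [h (-q) p (by linarith) hp]
  have hr0 : r = 0 := by nlinarith [h r (-q) hr (by linarith)]
  linarith [h 1 1 zero_le_one zero_le_one]

namespace Copositive

variable [Fintype m] {M : Matrix m m ℝ}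

lemma diag_nonneg (hM : Copositive M) (i : m) : 0 ≤ M i i := by
  classical
  simpa using hM.dotProduct_mulVec_nonneg (Pi.single i 1) (Pi.single_nonneg.2 zero_le_one)

lemma neg_sqrt_mul_le (hM : Copositive M) (i j : m) : -√(M i i * M j j) ≤ M i j := by
  classical
  refine neg_sqrt_mul_le_of_binaryForm_nonneg fun a b ha hb => ?_
  have hform := hM.dotProduct_mulVec_nonneg (Pi.single i a + Pi.single j b)
    (add_nonneg (Pi.single_nonneg.2 ha) (Pi.single_nonneg.2 hb))
  simp only [mulVec_add, add_dotProduct, dotProduct_add, single_dotProduct, mulVec_single,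
    Pi.smul_apply, col_apply, MulOpposite.smul_eq_mul_unop, MulOpposite.unop_op,
    hM.isSymm.apply i j] at hform
  linarith

end Copositive

/-- The matrix `Y` with its entries capped at the geometric means of the corresponding diagonal
entries, the upper bound that positive semidefiniteness of the 2×2 principal blocks imposes. The cap
is meaningful for `Y` with nonnegative diagonal: `√` of a negative product is `0`. -/
def geomMeanCap (Y : Matrix m m ℝ) : Matrix m m ℝ :=
  Matrix.of fun i j => min (Y i j) √(Y i i * Y j j)

lemma geomMeanCap_apply (Y : Matrix m m ℝ) (i j : m) :
    geomMeanCap Y i j = min (Y i j) √(Y i i * Y j j) :=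
  rfl

lemma geomMeanCap_submatrix (Y : Matrix m m ℝ) (f : k → m) :
    (geomMeanCap Y).submatrix f f = geomMeanCap (Y.submatrix f f) :=
  rfl

lemma geomMeanCap_apply_self (Y : Matrix m m ℝ) (i : m) : geomMeanCap Y i i = Y i i := by
  rw [geomMeanCap_apply, Real.sqrt_mul_self_eq_abs, min_eq_left (le_abs_self _)]

lemma geomMeanCap_le (Y : Matrix m m ℝ) (i j : m) : geomMeanCap Y i j ≤ Y i j :=
  min_le_left _ _

lemma isSymm_geomMeanCap {Y : Matrix m m ℝ} (hY : Y.IsSymm) : (geomMeanCap Y).IsSymm :=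
  IsSymm.ext fun i j => by
    rw [geomMeanCap_apply, geomMeanCap_apply, hY.apply i j, mul_comm (Y j j)]

lemma posSemidef_fin_two_of_sq_le_mul {M : Matrix (Fin 2) (Fin 2) ℝ} (hM : M.IsSymm)
    (h₀ : 0 ≤ M 0 0) (h₁ : 0 ≤ M 1 1) (hdet : M 0 1 ^ 2 ≤ M 0 0 * M 1 1) : M.PosSemidef := by
  refine .of_dotProduct_mulVec_nonneg (isHermitian_iff_isSymm.2 hM) fun x => ?_
  have hform : star x ⬝ᵥ M *ᵥ x =
      M 0 0 * x 0 ^ 2 + 2 * M 0 1 * (x 0 * x 1) + M 1 1 * x 1 ^ 2 := by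
    simp only [dotProduct, mulVec, Fin.sum_univ_two, star_trivial, hM.apply 0 1]
    ring
  rw [hform]
  rcases h₀.eq_or_lt with h₀ | h₀
  · have hoff : M 0 1 = 0 := by
      rw [← h₀, zero_mul] at hdet
      exact pow_eq_zero_iff two_ne_zero |>.1 (hdet.antisymm (sq_nonneg _))
    rw [← h₀, hoff]
    linarith [mul_nonneg h₁ (sq_nonneg (x 1))]
  · refine nonneg_of_mul_nonneg_right ?_ h₀
    calc 0 ≤ (M 0 0 * x 0 + M 0 1 * x 1) ^ 2 + (M 0 0 * M 1 1 - M 0 1 ^ 2) * x 1 ^ 2 :=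
          add_nonneg (sq_nonneg _) (mul_nonneg (sub_nonneg.2 hdet) (sq_nonneg _))
      _ = _ := by ring

lemma Copositive.posSemidef_geomMeanCap {M : Matrix (Fin 2) (Fin 2) ℝ} (hM : Copositive M) :
    (geomMeanCap M).PosSemidef := by
  have h₀ := hM.diag_nonneg 0
  have h₁ := hM.diag_nonneg 1
  refine posSemidef_fin_two_of_sq_le_mul (isSymm_geomMeanCap hM.isSymm) ?_ ?_ ?_ <;>
    simp only [geomMeanCap_apply_self]
  · exact h₀
  · exact h₁
  · have habs : |geomMeanCap M 0 1| ≤ √(M 0 0 * M 1 1) :=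
      abs_le.2 ⟨le_min (hM.neg_sqrt_mul_le 0 1) (neg_le_self (Real.sqrt_nonneg _)),
        min_le_right _ _⟩
    exact Real.sq_le (mul_nonneg h₀ h₁) |>.2 (abs_le.1 habs)

end Copositive

section TracePairing

variable {m k R : Type*} [Fintype m] [Fintype k]

lemma trace_mul_nonneg_of_entrywise_nonneg [Semiring R] [PartialOrder R] [IsOrderedRing R]
    {X : Matrix m k R} {Y : Matrix k m R} (hX : ∀ i j, 0 ≤ X i j) (hY : ∀ i j, 0 ≤ Y i j) :
    0 ≤ (X * Y).trace :=
  Finset.sum_nonneg fun i _ => Finset.sum_nonneg fun j _ => mul_nonneg (hX i j) (hY j i)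

open scoped ComplexOrder MatrixOrder Matrix.Norms.L2Operator in
lemma trace_mul_nonneg_of_posSemidef {𝕜 : Type*} [RCLike 𝕜]
    {X Y : Matrix m m 𝕜} (hX : X.PosSemidef) (hY : Y.PosSemidef) : 0 ≤ (X * Y).trace := by
  classical
  obtain ⟨B, rfl⟩ := CStarAlgebra.nonneg_iff_eq_star_mul_self.1 hX.nonneg
  rw [Matrix.mul_assoc, trace_mul_comm]
  exact (hY.mul_mul_conjTranspose_same B).trace_nonneg

lemma trace_vecMulVec_mul [CommSemiring R] (u v : m → R) (M : Matrix m m R) :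
    (vecMulVec u v * M).trace = v ⬝ᵥ M *ᵥ u := by
  rw [vecMulVec_mul, trace_vecMulVec, dotProduct_comm, dotProduct_mulVec]

end TracePairing

section DualCone

variable {n : ℕ}

lemma dualCone_add_dualCone_subset (C D : Set (Matrix (Fin n) (Fin n) ℝ)) :
    dualCone C + dualCone D ⊆ dualCone (C ∩ D) := by
  rintro _ ⟨A, hA, B, hB, rfl⟩
  refine ⟨hA.1.add hB.1, fun X hX => ?_⟩
  rw [Matrix.mul_add, trace_add]
  exact add_nonneg (hA.2 X hX.1) (hB.2 X hX.2)

lemma NonnegMat_subset_dualCone (n : ℕ) : NonnegMat n ⊆ dualCone (NonnegMat n) :=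
  fun _ hB => ⟨hB.1, fun _ hX => trace_mul_nonneg_of_entrywise_nonneg hX.2 hB.2⟩

lemma vecMulVec_self_mem_NonnegMat {v : Fin n → ℝ} (hv : 0 ≤ v) : vecMulVec v v ∈ NonnegMat n :=
  ⟨transpose_vecMulVec v v, fun i j => mul_nonneg (hv i) (hv j)⟩

lemma iota_zero (i j : Fin n) : iota i j 0 = 0 := by
  ext
  simp [iota]

lemma iota_transpose (i j : Fin n) (S : Matrix (Fin 2) (Fin 2) ℝ) :
    (iota i j S)ᵀ = iota i j Sᵀ := by
  ext r s
  simp only [iota, transpose_apply, of_apply, and_comm (a := s = _)]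
  ring

lemma trace_iota_mul (i j : Fin n) (S : Matrix (Fin 2) (Fin 2) ℝ)
    (Y : Matrix (Fin n) (Fin n) ℝ) :
    (iota i j S * Y).trace = (S * Y.submatrix ![i, j] ![i, j]).trace := by
  rw [trace_fin_two]
  simp only [Matrix.mul_apply, Fin.sum_univ_two, submatrix_apply]
  simp [iota, Matrix.trace, Matrix.mul_apply, add_mul, Finset.sum_add_distrib, ite_and, add_assoc]

lemma iota_mem_NonnegMat (i j : Fin n) {S : Matrix (Fin 2) (Fin 2) ℝ} (hS : S ∈ NonnegMat 2) :
    iota i j S ∈ NonnegMat n := by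
  refine ⟨by rw [IsSymm, iota_transpose, hS.1], fun r s => ?_⟩
  have hite (P : Prop) [Decidable P] (a b : Fin 2) : 0 ≤ if P then S a b else 0 :=
    ite_nonneg (hS.2 a b) le_rfl
  exact add_nonneg (add_nonneg (add_nonneg (hite ..) (hite ..)) (hite ..)) (hite ..)

lemma iota_mem_SDD {i j : Fin n} (hij : i < j) {S : Matrix (Fin 2) (Fin 2) ℝ}
    (hS : S.PosSemidef) : iota i j S ∈ SDD n := by
  refine ⟨fun k l => if k = i ∧ l = j then S else 0, fun k l => ?_, ?_⟩
  · dsimp only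
    split_ifs
    exacts [hS, .zero]
  · have hterm (k l : Fin n) :
        (if k < l then iota k l (if k = i ∧ l = j then S else 0) else 0) =
          if k = i then if l = j then iota i j S else 0 else 0 := by
      grind [iota_zero]
    simp [hterm]

lemma mem_dualCone_SDD_iff {Y : Matrix (Fin n) (Fin n) ℝ} :
    Y ∈ dualCone (SDD n) ↔
      Y.IsSymm ∧ ∀ i j, i < j → (Y.submatrix ![i, j] ![i, j]).PosSemidef := by
  refine and_congr_right fun hsymm => ⟨fun h i j hij => ?_, ?_⟩
  · refine .of_dotProduct_mulVec_nonneg (isHermitian_iff_isSymm.2 (hsymm.submatrix _)) fun v => ?_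
    rw [← trace_vecMulVec_mul, ← trace_iota_mul]
    exact h _ (iota_mem_SDD hij (posSemidef_vecMulVec_self_star v))
  · rintro h _ ⟨S, hS, rfl⟩
    simp only [Finset.sum_mul, trace_sum]
    refine Finset.sum_nonneg fun i _ => Finset.sum_nonneg fun j _ => ?_
    split_ifs with hij
    · rw [trace_iota_mul]
      exact trace_mul_nonneg_of_posSemidef (hS i j) (h i j hij)
    · simp

lemma copositive_submatrix_of_mem_dualCone {Y : Matrix (Fin n) (Fin n) ℝ}
    (hY : Y ∈ dualCone (SDD n ∩ NonnegMat n)) {i j : Fin n} (hij : i < j) :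
    Copositive (Y.submatrix ![i, j] ![i, j]) where
  isSymm := hY.1.submatrix _
  dotProduct_mulVec_nonneg v hv := by
    rw [← trace_vecMulVec_mul, ← trace_iota_mul]
    exact hY.2 _ ⟨iota_mem_SDD hij (posSemidef_vecMulVec_self_star v),
      iota_mem_NonnegMat i j (vecMulVec_self_mem_NonnegMat hv)⟩

lemma geomMeanCap_mem_dualCone_SDD {Y : Matrix (Fin n) (Fin n) ℝ}
    (hY : Y ∈ dualCone (SDD n ∩ NonnegMat n)) : geomMeanCap Y ∈ dualCone (SDD n) := by
  refine mem_dualCone_SDD_iff.2 ⟨isSymm_geomMeanCap hY.1, fun i j hij => ?_⟩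
  rw [geomMeanCap_submatrix]
  exact (copositive_submatrix_of_mem_dualCone hY hij).posSemidef_geomMeanCap

lemma sub_geomMeanCap_mem_NonnegMat {Y : Matrix (Fin n) (Fin n) ℝ} (hY : Y.IsSymm) :
    Y - geomMeanCap Y ∈ NonnegMat n :=
  ⟨hY.sub (isSymm_geomMeanCap hY), fun i j => sub_nonneg.2 (geomMeanCap_le Y i j)⟩

end DualCone

/-- `(SDDⁿ₊)* = (SDDⁿ)* + Nⁿ`, where `SDDⁿ₊ = SDDⁿ ∩ Nⁿ`. -/
theorem dual_SDDplus (n : ℕ) :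
    dualCone (SDD n ∩ NonnegMat n) = dualCone (SDD n) + NonnegMat n := by
  apply Subset.antisymm
  · intro Y hY
    exact ⟨geomMeanCap Y, geomMeanCap_mem_dualCone_SDD hY, Y - geomMeanCap Y,
      sub_geomMeanCap_mem_NonnegMat hY.1, add_sub_cancel _ _⟩
  · calc dualCone (SDD n) + NonnegMat n
        ⊆ dualCone (SDD n) + dualCone (NonnegMat n) :=
          add_subset_add_left (NonnegMat_subset_dualCone n)
      _ ⊆ dualCone (SDD n ∩ NonnegMat n) := dualCone_add_dualCone_subset _ _

end
end

section
/- Let G be a graph on vertices {1,…,t} with edge set E, and let U ∈ R^{t×n} have nonnegative entries with each row summing to 1, with u_i denoting the i-th row of U. Then SDD^G_+(U) := U^T (SDD^G_+) U equals the conic hull of all matrices vv^T with v ∈ seg(G,U) := ∪_{{i,j}∈E} [u_i, u_j]. -/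
open Matrix Set

noncomputable section

open scoped Classical in
/-- `SDD^G = Σ_{{i,j}∈E} ι_{ij}(S²₊)` (equal to `{0}` if `E = ∅`). -/
def SDDG {t : ℕ} (G : SimpleGraph (Fin t)) : Set (Matrix (Fin t) (Fin t) ℝ) :=
  {X | ∃ S : Fin t → Fin t → Matrix (Fin 2) (Fin 2) ℝ,
    (∀ i j : Fin t, (S i j).PosSemidef) ∧
    X = ∑ i : Fin t, ∑ j : Fin t, if i < j ∧ G.Adj i j then iota i j (S i j) else 0}

/-- `SDD^G₊ = SDD^G ∩ Nᵗ`. -/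
def SDDGplus {t : ℕ} (G : SimpleGraph (Fin t)) : Set (Matrix (Fin t) (Fin t) ℝ) :=
  SDDG G ∩ NonnegMat t

/-- `SDD^G₊(U) = Uᵀ (SDD^G₊) U`. -/
def SDDGplusU {t n : ℕ} (G : SimpleGraph (Fin t)) (U : Matrix (Fin t) (Fin n) ℝ) :
    Set (Matrix (Fin n) (Fin n) ℝ) :=
  {X | ∃ Y ∈ SDDGplus G, X = Uᵀ * Y * U}

/-- `seg(G,U) = ∪_{{i,j}∈E} [uᵢ, uⱼ]`. -/
def seg {t n : ℕ} (G : SimpleGraph (Fin t)) (U : Matrix (Fin t) (Fin n) ℝ) :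
    Set (Fin n → ℝ) :=
  {v | ∃ i j : Fin t, G.Adj i j ∧ v ∈ segment ℝ (U i) (U j)}

/-- The conic hull: finite nonnegative combinations of elements of `s`. -/
def conicHull {α : Type*} [AddCommMonoid α] [Module ℝ α] (s : Set α) : Set α :=
  {x | ∃ (N : ℕ) (c : Fin N → ℝ) (v : Fin N → α),
    (∀ k, 0 ≤ c k) ∧ (∀ k, v k ∈ s) ∧ x = ∑ k, c k • v k}

/-!
The congruence `X ↦ Uᵀ X U` is linear, so it commutes with conic hulls, and it sends `wwᵀ` to
`(Uᵀw)(Uᵀw)ᵀ`; hence the case `U = 1` suffices. There `ι_{ij}(S)` is the only summand contributing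
to the entry `(i, j)` of a matrix in `SDD^G`, so entrywise nonnegativity of the sum forces
`0 ≤ S 0 1` for every summand. Completing the square splits such an `S` into nonnegative multiples
of `wwᵀ` with `0 ≤ w`, and a nonzero `w` is a positive multiple of a point of the segment between
the two standard basis vectors.
-/

theorem coe_hull_eq_conicHull {E : Type*} [AddCommMonoid E] [Module ℝ E] (s : Set E) :
    (PointedCone.hull ℝ s : Set E) = conicHull s := by
  ext x
  refine Submodule.mem_span_set'.trans (exists_congr fun N => ⟨?_, ?_⟩)
  · rintro ⟨c, v, rfl⟩
    exact ⟨fun k => c k, fun k => v k, fun k => (c k).2, fun k => (v k).2, rfl⟩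
  · rintro ⟨c, v, hc, hv, rfl⟩
    exact ⟨fun k => ⟨c k, hc k⟩, fun k => ⟨v k, hv k⟩, rfl⟩

section Congruence

variable {m n R : Type*}

/-- The set of rank-one matrices `vvᵀ` with `v ∈ A`. -/
def outerSquares [Mul R] (A : Set (n → R)) : Set (Matrix n n R) :=
  {M | ∃ v ∈ A, M = vecMulVec v v}

theorem outerSquares_mono [Mul R] {A B : Set (n → R)} (h : A ⊆ B) :
    outerSquares A ⊆ outerSquares B :=
  fun _ ⟨v, hv, hM⟩ => ⟨v, h hv, hM⟩

theorem vecMul_submatrix_pair [NonUnitalNonAssocSemiring R] (A : Matrix m n R) (i j : m)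
    (w : Fin 2 → R) :
    w ᵥ* A.submatrix ![i, j] id = w 0 • A i + w 1 • A j := by
  ext k
  simp [vecMul, dotProduct, Fin.sum_univ_two]

variable [Fintype m] [CommSemiring R]

/-- The congruence map `X ↦ Bᵀ X B`, linear in `X`; `B` need not be square or invertible. -/
def congruence (B : Matrix m n R) : Matrix m m R →ₗ[R] Matrix n n R :=
  mulRightLinearMap n R B ∘ₗ mulLeftLinearMap m R Bᵀ

theorem congruence_apply (B : Matrix m n R) (X : Matrix m m R) :
    congruence B X = Bᵀ * X * B :=
  rfl

theorem congruence_vecMulVec (B : Matrix m n R) (v w : m → R) :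
    congruence B (vecMulVec v w) = vecMulVec (v ᵥ* B) (w ᵥ* B) := by
  rw [congruence_apply, mul_vecMulVec, vecMulVec_mul, mulVec_transpose]

theorem image_congruence_outerSquares (B : Matrix m n R) (A : Set (m → R)) :
    congruence B '' outerSquares A = outerSquares ((· ᵥ* B) '' A) := by
  ext M
  constructor
  · rintro ⟨_, ⟨v, hv, rfl⟩, rfl⟩
    exact ⟨v ᵥ* B, mem_image_of_mem _ hv, congruence_vecMulVec B v v⟩
  · rintro ⟨_, ⟨v, hv, rfl⟩, rfl⟩
    exact ⟨vecMulVec v v, ⟨v, hv, rfl⟩, congruence_vecMulVec B v v⟩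

theorem map_congruence_hull_outerSquares [PartialOrder R] [IsOrderedRing R] (B : Matrix m n R)
    (A : Set (m → R)) :
    (PointedCone.hull R (outerSquares A)).map (congruence B) =
      PointedCone.hull R (outerSquares ((· ᵥ* B) '' A)) := by
  rw [← image_congruence_outerSquares]
  exact Submodule.map_span _ _

end Congruence

section Segment

variable {𝕜 : Type*} [Semifield 𝕜] [LinearOrder 𝕜] [IsStrictOrderedRing 𝕜] {a b : 𝕜}

theorem exists_mem_segment_add_eq_smul {E : Type*} [AddCommMonoid E] [Module 𝕜 E] (ha : 0 ≤ a)
    (hb : 0 ≤ b) (x y : E) : ∃ v ∈ segment 𝕜 x y, a • x + b • y = (a + b) • v := by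
  rcases (add_nonneg ha hb).eq_or_lt' with hab | hab
  · obtain ⟨rfl, rfl⟩ := (add_eq_zero_iff_of_nonneg ha hb).1 hab
    exact ⟨x, left_mem_segment 𝕜 x y, by simp⟩
  · refine ⟨(a / (a + b)) • x + (b / (a + b)) • y,
      ⟨_, _, div_nonneg ha hab.le, div_nonneg hb hab.le, ?_, rfl⟩, ?_⟩
    · rw [← add_div, div_self hab.ne']
    · simp only [smul_add, smul_smul, mul_div_cancel₀ _ hab.ne']

theorem vecMulVec_mem_hull_outerSquares_segment {n : Type*} (ha : 0 ≤ a) (hb : 0 ≤ b)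
    (x y : n → 𝕜) :
    vecMulVec (a • x + b • y) (a • x + b • y) ∈
      PointedCone.hull 𝕜 (outerSquares (segment 𝕜 x y)) := by
  obtain ⟨v, hv, heq⟩ := exists_mem_segment_add_eq_smul ha hb x y
  have hab : 0 ≤ a + b := add_nonneg ha hb
  rw [heq, smul_vecMulVec, vecMulVec_smul, smul_smul]
  exact PointedCone.smul_mem _ (mul_nonneg hab hab) (PointedCone.subset_hull ⟨v, hv, rfl⟩)

theorem hull_outerSquares_vecMul_pair_le {m n : Type*} (A : Matrix m n 𝕜) (i j : m) :
    PointedCone.hull 𝕜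
        (outerSquares ((· ᵥ* A.submatrix ![i, j] id) '' Ici (0 : Fin 2 → 𝕜))) ≤
      PointedCone.hull 𝕜 (outerSquares (segment 𝕜 (A i) (A j))) := by
  refine Submodule.span_le.2 ?_
  rintro _ ⟨_, ⟨w, hw, rfl⟩, rfl⟩
  simpa only [vecMul_submatrix_pair, SetLike.mem_coe] using
    vecMulVec_mem_hull_outerSquares_segment (hw 0) (hw 1) (A i) (A j)

end Segment

theorem mem_hull_outerSquares_of_posSemidef_fin_two {S : Matrix (Fin 2) (Fin 2) ℝ}
    (hS : S.PosSemidef) (h01 : 0 ≤ S 0 1) :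
    S ∈ PointedCone.hull ℝ (outerSquares (Ici (0 : Fin 2 → ℝ))) := by
  have ha : 0 ≤ S 0 0 := hS.diag_nonneg
  have hd : 0 ≤ S 1 1 := hS.diag_nonneg
  have hsymm : S 1 0 = S 0 1 := hS.isHermitian.apply 0 1
  have hdet : S 0 1 ^ 2 ≤ S 0 0 * S 1 1 := by
    have := hS.det_nonneg
    rw [det_fin_two, hsymm] at this
    linarith
  have hb_of_ha : S 0 0 = 0 → S 0 1 = 0 := fun h => by
    rw [h, zero_mul] at hdet
    exact pow_eq_zero_iff two_ne_zero |>.1 (hdet.antisymm (sq_nonneg _))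
  have hschur : 0 ≤ S 1 1 - S 0 1 ^ 2 / S 0 0 :=
    sub_nonneg.2 (div_le_of_le_mul₀ ha hd (by rwa [mul_comm]))
  -- Complete the square; if `S 0 0 = 0`, then `S 0 1 = 0` and the junk value `0⁻¹ = 0` is harmless.
  have hdecomp : S = (S 0 0)⁻¹ • vecMulVec ![S 0 0, S 0 1] ![S 0 0, S 0 1] +
      (S 1 1 - S 0 1 ^ 2 / S 0 0) • vecMulVec ![0, 1] ![0, 1] := by
    ext k l
    fin_cases k <;> fin_cases l <;> simp [hsymm] <;> grind
  rw [hdecomp]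
  refine add_mem (PointedCone.smul_mem _ (inv_nonneg.2 ha) (PointedCone.subset_hull ⟨_, ?_, rfl⟩))
    (PointedCone.smul_mem _ hschur (PointedCone.subset_hull ⟨_, ?_, rfl⟩))
  · simp [Pi.le_def, Fin.forall_fin_two, ha, h01]
  · simp [Pi.le_def, Fin.forall_fin_two]

section Iota

variable {t : ℕ}

theorem iota_eq_congruence (i j : Fin t) (S : Matrix (Fin 2) (Fin 2) ℝ) :
    iota i j S = congruence ((1 : Matrix (Fin t) (Fin t) ℝ).submatrix ![i, j] id) S := by
  ext r s
  simp only [iota, of_apply, congruence_apply, mul_apply, transpose_apply, submatrix_apply,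
    one_apply, Fin.sum_univ_two, cons_val_zero, cons_val_one, id]
  grind

theorem iota_apply_of_lt {i j p q : Fin t} (hij : i < j) (hpq : p < q)
    (S : Matrix (Fin 2) (Fin 2) ℝ) :
    iota i j S p q = if i = p ∧ j = q then S 0 1 else 0 := by
  simp only [iota, of_apply]
  grind

end Iota

section SDDG

variable {t : ℕ}

theorem sum_iota_apply_of_lt {r : Fin t → Fin t → Prop} [∀ i j, Decidable (i < j ∧ r i j)]
    (S : Fin t → Fin t → Matrix (Fin 2) (Fin 2) ℝ) {p q : Fin t} (hpq : p < q) (hr : r p q) :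
    (∑ i, ∑ j, if i < j ∧ r i j then iota i j (S i j) else 0) p q = S p q 0 1 := by
  have hterm (i j : Fin t) : (if i < j ∧ r i j then iota i j (S i j) else 0) p q =
      if i = p then if j = q then S p q 0 1 else 0 else 0 := by
    split_ifs <;> grind [iota_apply_of_lt, Matrix.zero_apply]
  simp only [Matrix.sum_apply, hterm, Finset.sum_ite_eq', Finset.mem_univ, if_true,
    Finset.sum_ite_irrel, Finset.sum_const_zero]

theorem iota_mem_SDDG {G : SimpleGraph (Fin t)} {i j : Fin t} (hlt : i < j) (hij : G.Adj i j)
    {S : Matrix (Fin 2) (Fin 2) ℝ} (hS : S.PosSemidef) : iota i j S ∈ SDDG G := by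
  classical
  refine ⟨fun p q => if p = i ∧ q = j then S else 0, fun p q => ?_, ?_⟩
  · dsimp only
    split_ifs
    exacts [hS, PosSemidef.zero]
  · rw [Fintype.sum_eq_single i, Fintype.sum_eq_single j]
    · simp only [hlt, hij, and_self, if_true]
    · intro q hq
      simp only [hq, and_false, if_false, iota_eq_congruence, map_zero, ite_self]
    · intro p hp
      simp only [hp, false_and, if_false, iota_eq_congruence, map_zero, ite_self,
        Finset.sum_const_zero]

/-- `SDD^G` as a bundled pointed cone, so that it contains the hull of each of its subsets. -/
def sddgCone (G : SimpleGraph (Fin t)) : PointedCone ℝ (Matrix (Fin t) (Fin t) ℝ) where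
  carrier := SDDG G
  zero_mem' := ⟨0, fun _ _ => PosSemidef.zero, by simp [iota_eq_congruence]⟩
  add_mem' := by
    rintro _ _ ⟨S, hS, rfl⟩ ⟨T, hT, rfl⟩
    refine ⟨S + T, fun i j => (hS i j).add (hT i j), ?_⟩
    simp only [← Finset.sum_add_distrib, ← ite_add_zero, iota_eq_congruence, Pi.add_apply, map_add]
  smul_mem' := by
    rintro ⟨c, hc⟩ _ ⟨S, hS, rfl⟩
    refine ⟨fun i j => c • S i j, fun i j => (hS i j).smul hc, ?_⟩
    simp only [Nonneg.mk_smul, Finset.smul_sum, iota_eq_congruence, smul_ite, smul_zero, map_smul]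

/-- `Nᵗ` as a bundled pointed cone; its infimum with `sddgCone G` has carrier `SDDGplus G`. -/
def nonnegMatCone (t : ℕ) : PointedCone ℝ (Matrix (Fin t) (Fin t) ℝ) where
  carrier := NonnegMat t
  zero_mem' := ⟨isSymm_zero, fun _ _ => le_rfl⟩
  add_mem' hX hY := ⟨hX.1.add hY.1, fun i j => add_nonneg (hX.2 i j) (hY.2 i j)⟩
  smul_mem' c _ hX := ⟨hX.1.smul c, fun i j => mul_nonneg c.2 (hX.2 i j)⟩

theorem vecMulVec_mem_NonnegMat {v : Fin t → ℝ} (hv : 0 ≤ v) : vecMulVec v v ∈ NonnegMat t :=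
  ⟨transpose_vecMulVec v v, fun i j => mul_nonneg (hv i) (hv j)⟩

end SDDG

section Seg

variable {t m n : ℕ}

theorem image_vecMul_seg (G : SimpleGraph (Fin t)) (A : Matrix (Fin t) (Fin m) ℝ)
    (B : Matrix (Fin m) (Fin n) ℝ) : (· ᵥ* B) '' seg G A = seg G (A * B) := by
  have himage (i j : Fin t) :
      (· ᵥ* B) '' segment ℝ (A i) (A j) = segment ℝ ((A * B) i) ((A * B) j) :=
    image_segment ℝ B.vecMulLinear.toAffineMap (A i) (A j)
  ext v
  constructor
  · rintro ⟨w, ⟨i, j, hij, hw⟩, rfl⟩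
    exact ⟨i, j, hij, himage i j ▸ mem_image_of_mem _ hw⟩
  · rintro ⟨i, j, hij, hv⟩
    obtain ⟨w, hw, rfl⟩ := himage i j ▸ hv
    exact ⟨w, ⟨i, j, hij, hw⟩, rfl⟩

theorem segment_subset_seg {G : SimpleGraph (Fin t)} (U : Matrix (Fin t) (Fin n) ℝ) {i j : Fin t}
    (hij : G.Adj i j) : segment ℝ (U i) (U j) ⊆ seg G U :=
  fun _ hv => ⟨i, j, hij, hv⟩

theorem exists_lt_of_mem_seg {G : SimpleGraph (Fin t)} {U : Matrix (Fin t) (Fin n) ℝ}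
    {v : Fin n → ℝ} (hv : v ∈ seg G U) :
    ∃ i j, i < j ∧ G.Adj i j ∧ v ∈ segment ℝ (U i) (U j) := by
  obtain ⟨i, j, hij, hv⟩ := hv
  rcases hij.ne.lt_or_gt with hlt | hgt
  · exact ⟨i, j, hlt, hij, hv⟩
  · exact ⟨j, i, hgt, hij.symm, segment_symm ℝ (U i) (U j) ▸ hv⟩

end Seg

section Generators

variable {t : ℕ} {G : SimpleGraph (Fin t)}

theorem outerSquares_seg_one_subset_SDDGplus : outerSquares (seg G 1) ⊆ SDDGplus G := by
  rintro _ ⟨v, hv, rfl⟩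
  obtain ⟨i, j, hlt, hij, a, b, ha, hb, -, rfl⟩ := exists_lt_of_mem_seg hv
  refine ⟨?_, vecMulVec_mem_NonnegMat fun k => ?_⟩
  · have hiota := iota_mem_SDDG hlt hij (posSemidef_vecMulVec_self_star ![a, b])
    rwa [star_trivial, iota_eq_congruence, congruence_vecMulVec, vecMul_submatrix_pair] at hiota
  · exact add_nonneg (mul_nonneg ha (zero_le_one_elem i k)) (mul_nonneg hb (zero_le_one_elem j k))

theorem iota_mem_hull_outerSquares_seg_one {i j : Fin t} (hij : G.Adj i j)
    {S : Matrix (Fin 2) (Fin 2) ℝ} (hS : S.PosSemidef) (h01 : 0 ≤ S 0 1) :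
    iota i j S ∈ PointedCone.hull ℝ (outerSquares (seg G 1)) := by
  have hmap : iota i j S ∈ (PointedCone.hull ℝ (outerSquares (Ici 0))).map
      (congruence ((1 : Matrix (Fin t) (Fin t) ℝ).submatrix ![i, j] id)) :=
    ⟨S, mem_hull_outerSquares_of_posSemidef_fin_two hS h01, (iota_eq_congruence i j S).symm⟩
  rw [map_congruence_hull_outerSquares] at hmap
  exact Submodule.span_mono (outerSquares_mono (segment_subset_seg 1 hij))
    (hull_outerSquares_vecMul_pair_le 1 i j hmap)

theorem SDDGplus_eq_hull_outerSquares_seg_one :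
    SDDGplus G =
      PointedCone.hull ℝ (outerSquares (seg G (1 : Matrix (Fin t) (Fin t) ℝ))) := by
  refine Subset.antisymm ?_
    (Submodule.span_le (p := sddgCone G ⊓ nonnegMatCone t).2 outerSquares_seg_one_subset_SDDGplus)
  rintro _ ⟨⟨S, hS, rfl⟩, -, hnonneg⟩
  classical
  refine sum_mem fun i _ => sum_mem fun j _ => ?_
  split_ifs with h
  · refine iota_mem_hull_outerSquares_seg_one h.2 (hS i j) ?_
    simpa only [sum_iota_apply_of_lt S h.1 h.2] using hnonneg i j
  · exact zero_mem _

end Generators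

theorem SDDGplusU_eq_conicHull_general {t n : ℕ} (G : SimpleGraph (Fin t))
    (U : Matrix (Fin t) (Fin n) ℝ) :
    SDDGplusU G U = conicHull {M | ∃ v ∈ seg G U, M = vecMulVec v v} := by
  calc SDDGplusU G U = congruence U '' SDDGplus G := by
        ext X
        exact exists_congr fun Y => and_congr_right fun _ => eq_comm
    _ = (PointedCone.hull ℝ (outerSquares (seg G 1))).map (congruence U) := by
        rw [SDDGplus_eq_hull_outerSquares_seg_one, PointedCone.coe_map]
    _ = PointedCone.hull ℝ (outerSquares (seg G U)) := by
        rw [map_congruence_hull_outerSquares, image_vecMul_seg, Matrix.one_mul]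
    _ = conicHull {M | ∃ v ∈ seg G U, M = vecMulVec v v} := coe_hull_eq_conicHull _

/-- `SDD^G₊(U)` is the conic hull of all `vvᵀ` with `v ∈ seg(G,U)`. -/
theorem SDDGplusU_eq_conicHull {t n : ℕ} (G : SimpleGraph (Fin t))
    (U : Matrix (Fin t) (Fin n) ℝ)
    (hU : ∀ i j, 0 ≤ U i j) (hrow : ∀ i, ∑ j, U i j = 1) :
    SDDGplusU G U = conicHull {M | ∃ v ∈ seg G U, M = vecMulVec v v} :=
  SDDGplusU_eq_conicHull_general G U

end
end
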